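/- arXiv:1902.06077 — 5 statements merged into one kernel-verified Lean document; each statement's English description precedes it below -/
import Mathlib

section
/- Let (a_k)_{k≥1} be a sequence of complex numbers with Σ_{k≥1}|a_k|·log(k+1) < ∞. Then the odd discrete Hilbert transform of a is summable: Σ_{n≥1}|ℏᵒa(n)| < ∞. -/
/-- The odd discrete Hilbert transform
`ℏᵒa(n) = Σ_{k≥1, k≠n} 2k·a_k/(n² − k²) − a_n/(2n)`. -/
noncomputable def hbarO (a : ℕ → ℂ) (n : ℕ) : ℂ :=
  (∑' k : ℕ, if 1 ≤ k ∧ k ≠ n then 2 * (k : ℂ) * a k / ((n : ℂ) ^ 2 - (k : ℂ) ^ 2) else 0)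
    - a n / (2 * (n : ℂ))

/-- the kernel -/
noncomputable def gK (K j : ℕ) : ℝ :=
  if j = K then 0 else 2 * ((K : ℝ) + 1) / |((j : ℝ) + 1) ^ 2 - ((K : ℝ) + 1) ^ 2|

noncomputable def Hs (n : ℕ) : ℝ := ∑ i ∈ Finset.range n, 1 / ((i : ℝ) + 1)

lemma gK_nonneg (K j : ℕ) : 0 ≤ gK K j := by
  unfold gK; split_ifs <;> positivity

lemma Hs_le (n : ℕ) : Hs n ≤ 1 + Real.log n := by
  have h := harmonic_le_one_add_log n
  have e : ((harmonic n : ℚ) : ℝ) = Hs n := by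
    simp [harmonic, Hs]
  linarith

lemma tele (L M : ℕ) :
    ∑ i ∈ Finset.range M, (1 / ((i : ℝ) + 1) - 1 / ((i : ℝ) + 1 + L)) = Hs M + Hs L - Hs (L + M) := by
  induction M with
  | zero => simp [Hs]
  | succ M ih =>
    rw [Finset.sum_range_succ, ih]
    have h1 : Hs (M + 1) = Hs M + 1 / ((M : ℝ) + 1) := by simp [Hs, Finset.sum_range_succ]
    have h2 : Hs (L + (M + 1)) = Hs (L + M) + 1 / ((M : ℝ) + 1 + L) := by
      rw [← add_assoc]
      simp only [Hs, Finset.sum_range_succ]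
      push_cast
      congr 2
      ring
    rw [h1, h2]; ring

lemma Hs_mono {m n : ℕ} (h : m ≤ n) : Hs m ≤ Hs n := by
  apply Finset.sum_le_sum_of_subset_of_nonneg
  · simpa using h
  · intros; positivity

lemma low (K : ℕ) : ∑ j ∈ Finset.range K, gK K j ≤ 2 * Hs K := by
  have e : Hs K = ∑ j ∈ Finset.range K, 1 / ((K : ℝ) - j) := by
    unfold Hs
    rw [← Finset.sum_range_reflect]
    apply Finset.sum_congr rfl
    intro j hj
    have hj := Finset.mem_range.1 hj
    have : ((K - 1 - j : ℕ) : ℝ) = K - 1 - j := by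
      rw [Nat.cast_sub (by omega), Nat.cast_sub (by omega)]; simp
    rw [this]; congr 1; ring
  rw [e, Finset.mul_sum]
  apply Finset.sum_le_sum
  intro j hj
  have hj := Finset.mem_range.1 hj
  have hj' : (j : ℝ) < K := by exact_mod_cast hj
  have hj0 : (0 : ℝ) ≤ j := by positivity
  unfold gK
  rw [if_neg (by omega), abs_of_neg (by nlinarith), mul_one_div,
    div_le_div_iff₀ (by nlinarith) (by linarith)]
  nlinarith [mul_nonneg hj0 (sub_nonneg.2 hj'.le)]

lemma high (K M : ℕ) : ∑ i ∈ Finset.range M, gK K (K + 1 + i) ≤ Hs (2 * (K + 1)) := by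
  have : ∑ i ∈ Finset.range M, gK K (K + 1 + i)
      = ∑ i ∈ Finset.range M, (1 / ((i : ℝ) + 1) - 1 / ((i : ℝ) + 1 + (2 * (K + 1) : ℕ))) := by
    apply Finset.sum_congr rfl
    intro i _
    unfold gK
    have hi : (0 : ℝ) ≤ i := by positivity
    have hK : (0 : ℝ) ≤ K := by positivity
    push_cast
    have e : ((K : ℝ) + 1 + i + 1) ^ 2 - ((K : ℝ) + 1) ^ 2
      = ((i : ℝ) + 1) * ((i : ℝ) + 1 + 2 * (K + 1)) := by ring
    rw [if_neg (by omega), e, abs_of_pos (by positivity)]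
    field_simp
    ring
  rw [this, tele]
  have := Hs_mono (show M ≤ 2 * (K + 1) + M by omega)
  linarith

lemma row (K N : ℕ) : ∑ j ∈ Finset.range N, gK K j ≤ 10 * Real.log ((K : ℝ) + 2) := by
  have h1 : ∑ j ∈ Finset.range N, gK K j ≤ ∑ j ∈ Finset.range (K + 1 + N), gK K j := by
    apply Finset.sum_le_sum_of_subset_of_nonneg
    · intro x; simp; omega
    · intros; exact gK_nonneg _ _
  rw [Finset.sum_range_add, Finset.sum_range_succ] at h1
  have h2 : gK K K = 0 := by simp [gK]
  have h3 := low K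
  have h4 := high K N
  have h5 := Hs_mono (show K ≤ K + 1 by omega)
  have h6 := Hs_le (K + 1)
  have h7 := Hs_le (2 * (K + 1))
  push_cast at h6 h7
  rw [Real.log_mul (by norm_num) (by positivity)] at h7
  have h8 : Real.log ((K : ℝ) + 1) ≤ Real.log ((K : ℝ) + 2) :=
    Real.log_le_log (by positivity) (by linarith)
  have h9 : Real.log 2 ≤ Real.log ((K : ℝ) + 2) :=
    Real.log_le_log (by positivity) (by linarith [(Nat.cast_nonneg K : (0 : ℝ) ≤ K)])
  have := Real.log_two_gt_d9
  linarith

/-- if `Σ_{k≥1} |a_k| log(k+1) < ∞` then the odd discrete Hilbert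
transform of `a` is summable. -/
theorem stmt_7 (a : ℕ → ℂ)
    (ha : Summable fun k : ℕ => ‖a (k + 1)‖ * Real.log ((k : ℝ) + 2)) :
    Summable fun n : ℕ => ‖hbarO a (n + 1)‖ := by
  have hg : ∀ K, Summable (gK K) := fun K =>
    summable_of_sum_range_le (gK_nonneg K) (row K)
  have hgt : ∀ K, ∑' j, gK K j ≤ 10 * Real.log ((K : ℝ) + 2) := fun K =>
    Real.tsum_le_of_sum_range_le (gK_nonneg K) (row K)
  let T : ℕ → ℕ → ℂ := fun n k => if 1 ≤ k ∧ k ≠ n + 1 then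
    2 * (k : ℂ) * a k / (((n + 1 : ℕ) : ℂ) ^ 2 - (k : ℂ) ^ 2) else 0
  have hT0 : ∀ n, T n 0 = 0 := fun n => by simp [T]
  have hT : ∀ n K, ‖T n (K + 1)‖ = ‖a (K + 1)‖ * gK K n := by
    intro n K
    by_cases h : n = K
    · simp [T, gK, h]
    · have e : ‖(((n + 1 : ℕ) : ℂ) ^ 2 - ((K + 1 : ℕ) : ℂ) ^ 2)‖
          = |((n : ℝ) + 1) ^ 2 - ((K : ℝ) + 1) ^ 2| := by
        rw [← Real.norm_eq_abs, ← Complex.norm_real]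
        push_cast; rfl
      simp only [T, gK, if_neg h]
      rw [if_pos (by omega), norm_div, norm_mul, norm_mul, e, Complex.norm_natCast]
      simp only [Complex.norm_ofNat]
      push_cast
      ring
  have hS : Summable (fun p : ℕ × ℕ => ‖T p.2 p.1‖) := by
    rw [summable_prod_of_nonneg (fun _ => norm_nonneg _)]
    constructor
    · intro k
      rcases k with _ | K
      · simp [hT0, summable_zero]
      · simp only [hT]; exact (hg K).mul_left _
    · rw [← summable_nat_add_iff 1]
      simp only [hT, tsum_mul_left]
      refine Summable.of_nonneg_of_le (fun K => mul_nonneg (norm_nonneg _) (tsum_nonneg (gK_nonneg K)))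
        (fun K => ?_) (ha.mul_left 10)
      calc _ ≤ ‖a (K + 1)‖ * (10 * Real.log ((K : ℝ) + 2)) :=
            mul_le_mul_of_nonneg_left (hgt K) (norm_nonneg _)
        _ = _ := by ring
  have hS' : Summable (fun p : ℕ × ℕ => ‖T p.1 p.2‖) := hS.prod_symm
  have hS2 := (summable_prod_of_nonneg (fun _ => norm_nonneg _)).1 hS'
  have ha1 : Summable fun k : ℕ => ‖a (k + 1)‖ := by
    refine Summable.of_nonneg_of_le (fun _ => norm_nonneg _) (fun K => ?_) (ha.mul_left 2)
    have h9 : Real.log 2 ≤ Real.log ((K : ℝ) + 2) :=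
      Real.log_le_log (by positivity) (by linarith [(Nat.cast_nonneg K : (0 : ℝ) ≤ K)])
    have := Real.log_two_gt_d9
    nlinarith [norm_nonneg (a (K + 1))]
  refine Summable.of_nonneg_of_le (fun _ => norm_nonneg _) (fun n => ?_) (hS2.2.add ha1)
  have e : hbarO a (n + 1) = (∑' k, T n k) - a (n + 1) / (2 * ((n + 1 : ℕ) : ℂ)) := rfl
  rw [e]
  refine (norm_sub_le _ _).trans (add_le_add (norm_tsum_le_tsum_norm (hS2.1 n)) ?_)
  rw [norm_div, norm_mul, Complex.norm_natCast, Complex.norm_ofNat]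
  apply div_le_self (norm_nonneg _)
  push_cast
  linarith [(Nat.cast_nonneg n : (0 : ℝ) ≤ n)]
end

section
/- Let (a_k)_{k≥1} be a sequence of complex numbers with Σ_{k≥1}|a_k|·log(k+1) < ∞ and Σ_{k≥1} a_k = 0. Then the even discrete Hilbert transform of a is summable: Σ_{n≥1}|ℏᵉa(n)| < ∞. -/
/-- The even discrete Hilbert transform
`ℏᵉa(n) = Σ_{k≥1, k≠n} 2n·a_k/(n² − k²) + a_n/(2n)`. -/
noncomputable def hbarE (a : ℕ → ℂ) (n : ℕ) : ℂ :=
  (∑' k : ℕ, if 1 ≤ k ∧ k ≠ n then 2 * (n : ℂ) * a k / ((n : ℂ) ^ 2 - (k : ℂ) ^ 2) else 0)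
    + a n / (2 * (n : ℂ))

/-- real kernel minus `2/(n+1)`, indices shifted -/
noncomputable def auxT (k n : ℕ) : ℝ :=
  if k = n then 1 / (2 * ((n : ℝ) + 1))
  else 2 * ((n : ℝ) + 1) / (((n : ℝ) + 1) ^ 2 - ((k : ℝ) + 1) ^ 2)

noncomputable def auxD (k n : ℕ) : ℝ := |auxT k n - 2 / ((n : ℝ) + 1)|

noncomputable def auxH (n : ℕ) : ℝ := ∑ i ∈ Finset.range n, 1 / ((i : ℝ) + 1)

lemma auxD_lt (k n : ℕ) (h : n < k) :
    auxD k n ≤ 2 * (1 / ((n : ℝ) + 1)) + 2 * (1 / (((k - 1 - n : ℕ) : ℝ) + 1)) := by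
  obtain ⟨m, rfl⟩ : ∃ m, k = n + 1 + m := ⟨k - (n + 1), by omega⟩
  have e : n + 1 + m - 1 - n = m := by omega
  rw [e]
  unfold auxD auxT
  rw [if_neg (by omega)]
  push_cast
  have hn : (0 : ℝ) ≤ n := n.cast_nonneg
  have hm : (0 : ℝ) ≤ m := m.cast_nonneg
  generalize (n : ℝ) = x at *
  generalize (m : ℝ) = y at *
  have e2 : 2 * (x + 1) / ((x + 1) ^ 2 - (x + 1 + y + 1) ^ 2) - 2 / (x + 1)
      = -(2 * (x + 1 + y + 1) ^ 2 / ((x + 1) * ((y + 1) * (2 * x + y + 3)))) := by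
    have h1 : (x + 1) ^ 2 - (x + 1 + y + 1) ^ 2 = -((y + 1) * (2 * x + y + 3)) := by ring
    rw [h1]
    have : (y + 1) ≠ 0 := by positivity
    have : (2 * x + y + 3) ≠ 0 := by positivity
    have : (x + 1) ≠ 0 := by positivity
    field_simp
    ring
  rw [e2, abs_neg, abs_of_nonneg (by positivity)]
  have e3 : 2 * (1 / (x + 1)) + 2 * (1 / (y + 1)) = 2 * (x + 1 + y + 1) / ((x + 1) * (y + 1)) := by
    field_simp
    ring
  rw [e3, div_le_div_iff₀ (by positivity) (by positivity)]
  have : 0 ≤ 2 * (x + 1 + y + 1) * ((x + 1) * (y + 1)) * (x + 1) := by positivity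
  nlinarith [this]

lemma auxD_eq (n : ℕ) : auxD n n ≤ 2 * (1 / ((n : ℝ) + 1)) := by
  unfold auxD auxT
  rw [if_pos rfl]
  have hn : (0 : ℝ) < (n : ℝ) + 1 := by positivity
  have e : 1 / (2 * ((n : ℝ) + 1)) - 2 / ((n : ℝ) + 1) = -(3 / 2 * (1 / ((n : ℝ) + 1))) := by
    field_simp
    norm_num
  rw [e, abs_neg, abs_of_nonneg (by positivity)]
  have : 0 ≤ 1 / ((n : ℝ) + 1) := by positivity
  linarith

lemma auxD_gt (k m : ℕ) :
    auxD k (k + 1 + m) ≤ 1 / ((m : ℝ) + 1) - 1 / (((k + 1 + m : ℕ) : ℝ) + 1) := by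
  unfold auxD auxT
  rw [if_neg (by omega)]
  push_cast
  have hn : (0 : ℝ) ≤ k := k.cast_nonneg
  have hm : (0 : ℝ) ≤ m := m.cast_nonneg
  generalize (k : ℝ) = x at *
  generalize (m : ℝ) = y at *
  have e2 : 2 * (x + 1 + y + 1) / ((x + 1 + y + 1) ^ 2 - (x + 1) ^ 2) - 2 / (x + 1 + y + 1)
      = (2 * (x + 1) ^ 2 / ((x + 1 + y + 1) * ((y + 1) * (2 * x + y + 3)))) := by
    have h1 : (x + 1 + y + 1) ^ 2 - (x + 1) ^ 2 = ((y + 1) * (2 * x + y + 3)) := by ring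
    rw [h1]
    have : (y + 1) ≠ 0 := by positivity
    have : (2 * x + y + 3) ≠ 0 := by positivity
    have : (x + 1 + y + 1) ≠ 0 := by positivity
    field_simp
    ring
  rw [e2, abs_of_nonneg (by positivity)]
  have e3 : 1 / (y + 1) - 1 / (x + 1 + y + 1) = (x + 1) / ((x + 1 + y + 1) * (y + 1)) := by
    have : (y + 1) ≠ 0 := by positivity
    have : (x + 1 + y + 1) ≠ 0 := by positivity
    field_simp
    ring
  rw [e3, div_le_div_iff₀ (by positivity) (by positivity)]
  have : 0 ≤ (x + 1) * ((x + 1 + y + 1) * (y + 1)) * (y + 1) := by positivity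
  nlinarith [this]

lemma auxH_mono {m n : ℕ} (h : m ≤ n) : auxH m ≤ auxH n := by
  unfold auxH
  apply Finset.sum_le_sum_of_subset_of_nonneg
  · exact Finset.range_mono h
  · intros; positivity

lemma auxH_le (k : ℕ) : auxH (k + 1) ≤ 1 + Real.log ((k : ℝ) + 1) := by
  have := harmonic_le_one_add_log (k + 1)
  unfold harmonic at this
  unfold auxH
  push_cast at this
  simpa using this

lemma auxD_sum (k N : ℕ) : ∑ n ∈ Finset.range N, auxD k n ≤ 5 * auxH (k + 1) := by
  have h1 : ∑ n ∈ Finset.range N, auxD k n ≤ ∑ n ∈ Finset.range (k + 1 + N), auxD k n := by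
    apply Finset.sum_le_sum_of_subset_of_nonneg
    · exact Finset.range_mono (by omega)
    · intros; exact abs_nonneg _
  refine h1.trans ?_
  rw [Finset.sum_range_add, Finset.sum_range_succ]
  have h2 : ∑ n ∈ Finset.range k, auxD k n ≤ 2 * auxH k + 2 * auxH k := by
    calc _ ≤ ∑ n ∈ Finset.range k, (2 * (1 / ((n : ℝ) + 1)) + 2 * (1 / (((k - 1 - n : ℕ) : ℝ) + 1))) :=
          Finset.sum_le_sum fun n hn => auxD_lt k n (Finset.mem_range.1 hn)
      _ = _ := by
          rw [Finset.sum_add_distrib, ← Finset.mul_sum, ← Finset.mul_sum,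
            Finset.sum_range_reflect (fun i : ℕ => 1 / ((i : ℝ) + 1)) k]
          rfl
  have h3 : ∑ m ∈ Finset.range N, auxD k (k + 1 + m) ≤ auxH (k + 1) := by
    calc _ ≤ ∑ m ∈ Finset.range N, (1 / ((m : ℝ) + 1) - 1 / (((k + 1 + m : ℕ) : ℝ) + 1)) :=
          Finset.sum_le_sum fun m _ => auxD_gt k m
      _ = auxH N - (auxH (k + 1 + N) - auxH (k + 1)) := by
          rw [Finset.sum_sub_distrib]
          unfold auxH
          rw [Finset.sum_range_add _ (k + 1) N]
          ring
      _ ≤ _ := by linarith [auxH_mono (show N ≤ k + 1 + N by omega)]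
  have h4 : auxH (k + 1) = auxH k + 1 / ((k : ℝ) + 1) := Finset.sum_range_succ _ _
  have h5 : 0 ≤ 1 / ((k : ℝ) + 1) := by positivity
  linarith [auxD_eq k]

/-- if `Σ_{k≥1} |a_k| log(k+1) < ∞` and `Σ_{k≥1} a_k = 0`, then the
even discrete Hilbert transform of `a` is summable. -/
theorem stmt_8 (a : ℕ → ℂ)
    (ha : Summable fun k : ℕ => ‖a (k + 1)‖ * Real.log ((k : ℝ) + 2))
    (h0 : ∑' k : ℕ, a (k + 1) = 0) :
    Summable fun n : ℕ => ‖hbarE a (n + 1)‖ := by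
  have l2 : 0 < Real.log 2 := Real.log_pos (by norm_num)
  have hlog : ∀ k : ℕ, Real.log 2 ≤ Real.log ((k : ℝ) + 2) := fun k =>
    Real.log_le_log (by norm_num) (by linarith [(k.cast_nonneg : (0 : ℝ) ≤ k)])
  have hs : Summable fun k : ℕ => ‖a (k + 1)‖ := by
    refine Summable.of_nonneg_of_le (fun _ => norm_nonneg _) (fun k => ?_)
      (ha.mul_right (1 / Real.log 2))
    rw [mul_one_div, le_div_iff₀ l2]
    exact mul_le_mul_of_nonneg_left (hlog k) (norm_nonneg _)
  have hDs : ∀ k, Summable (auxD k) := fun k =>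
    summable_of_sum_range_le (fun _ => abs_nonneg _) (auxD_sum k)
  have hDt : ∀ k, ∑' n, auxD k n ≤ 5 * (1 / Real.log 2 + 1) * Real.log ((k : ℝ) + 2) := by
    intro k
    refine (Real.tsum_le_of_sum_range_le (fun _ => abs_nonneg _) (auxD_sum k)).trans ?_
    have h1 := auxH_le k
    have h2 : Real.log ((k : ℝ) + 1) ≤ Real.log ((k : ℝ) + 2) :=
      Real.log_le_log (by positivity) (by linarith)
    have h3 : 1 ≤ 1 / Real.log 2 * Real.log ((k : ℝ) + 2) := by
      rw [one_div_mul_eq_div, le_div_iff₀ l2]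
      linarith [hlog k]
    nlinarith
  let F : ℕ × ℕ → ℂ := fun p => a (p.1 + 1) * ((auxT p.1 p.2 - 2 / ((p.2 : ℝ) + 1) : ℝ) : ℂ)
  have hFn : ∀ k n, ‖F (k, n)‖ = ‖a (k + 1)‖ * auxD k n := fun k n => by
    simp only [F, norm_mul, Complex.norm_real]; rfl
  have hF : Summable fun p => ‖F p‖ := by
    rw [summable_prod_of_nonneg (fun _ => norm_nonneg _)]
    refine ⟨fun k => ?_, ?_⟩
    · simp only [hFn]
      exact (hDs k).mul_left _
    · simp only [hFn, tsum_mul_left]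
      refine Summable.of_nonneg_of_le (fun k => mul_nonneg (norm_nonneg _) (tsum_nonneg fun _ => abs_nonneg _))
        (fun k => ?_) (ha.mul_left (5 * (1 / Real.log 2 + 1)))
      calc _ ≤ _ := mul_le_mul_of_nonneg_left (hDt k) (norm_nonneg _)
        _ = _ := by ring
  have hF2 : Summable fun p : ℕ × ℕ => ‖F p.swap‖ := hF.prod_symm
  have hF3 := (summable_prod_of_nonneg (fun _ => norm_nonneg _)).1 hF2
  have key : ∀ n, hbarE a (n + 1) = ∑' k, F (k, n) := by
    intro n
    have s1 : Summable fun k => F (k, n) := (hF3.1 n).of_norm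
    have s2 : Summable fun k => a (k + 1) * (2 / ((n : ℂ) + 1)) := hs.of_norm.mul_right _
    have e1 : ∀ k, a (k + 1) * (auxT k n : ℂ) = F (k, n) + a (k + 1) * (2 / ((n : ℂ) + 1)) := by
      intro k
      simp only [F]
      push_cast
      ring
    have s3 : Summable fun k => a (k + 1) * (auxT k n : ℂ) := by
      simp only [e1]; exact s1.add s2
    have e2 : ∑' k, a (k + 1) * (auxT k n : ℂ) = ∑' k, F (k, n) := by
      simp only [e1]
      rw [s1.tsum_add s2, tsum_mul_right, h0, zero_mul, add_zero]
    rw [← e2, s3.tsum_eq_add_tsum_ite n]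
    unfold hbarE
    rw [add_comm]
    congr 1
    · simp [auxT, div_eq_mul_inv]
    · rw [← (Nat.succ_injective).tsum_eq]
      · refine tsum_congr fun k => ?_
        by_cases h : k = n
        · simp [h]
        · simp [h, auxT]
          ring
      · intro k hk
        cases k with
        | zero => simp at hk
        | succ k => exact ⟨k, rfl⟩
  refine Summable.of_nonneg_of_le (fun _ => norm_nonneg _) (fun n => ?_) hF3.2
  rw [key]
  exact norm_tsum_le_tsum_norm (hF3.1 n)
end

section
/- Let d ≥ 1, η ∈ {0,1}^d, and let a = (a_k)_{k∈ℕ₊^d} be complex numbers with Σ_k |a_k| < ∞. Define f(x) = Σ_{k∈ℕ₊^d} a_k · (∏_{j:η_j=1} cos(k_j x_j)) · (∏_{j:η_j=0} sin(k_j x_j)) for x ∈ [0,π]^d. Then for every m ∈ ℕ₊^d the re-expansion coefficient b_m := (2/π)^d ∫_{[0,π]^d} f(x) · (∏_{j:η_j=0} cos(m_j x_j)) · (∏_{j:η_j=1} sin(m_j x_j)) dx equals (2/π)^d · ℏ_η⁻a(m), with the defining series converging absolutely. Consequently, Σ_m |b_m| < ∞ if and only if Σ_m |ℏ_η⁻a(m)|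 < ∞. -/
open MeasureTheory

/-- The halved mixed discrete Hilbert transform `ℏ_η⁻a(m)`:
`Σ_{k: k_j−m_j odd ∀j} a_k ∏_{η_j=1}(1/(m_j+k_j)+1/(m_j−k_j)) ∏_{η_j=0}(1/(m_j+k_j)+1/(k_j−m_j))`. -/
noncomputable def hbarMinusMulti {d : ℕ} (η : Fin d → Bool) (a : (Fin d → ℕ) → ℂ)
    (m : Fin d → ℕ) : ℂ :=
  ∑' k : Fin d → ℕ, if ∀ j, 1 ≤ k j ∧ Odd (k j + m j) then
    a k * ∏ j, (if η j then 1 / ((m j : ℂ) + (k j : ℂ)) + 1 / ((m j : ℂ) - (k j : ℂ))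
                else 1 / ((m j : ℂ) + (k j : ℂ)) + 1 / ((k j : ℂ) - (m j : ℂ)))
    else 0

lemma aux_sin_int (n : ℤ) : ∫ x in (0:ℝ)..Real.pi, Real.sin ((n:ℝ) * x) =
    if Odd n then 2 / (n:ℝ) else 0 := by
  by_cases h0 : n = 0
  · subst h0; simp
  have hn : (n:ℝ) ≠ 0 := by exact_mod_cast h0
  rw [intervalIntegral.integral_comp_mul_left (fun x => Real.sin x) hn, integral_sin]
  rw [Real.cos_int_mul_pi]
  split_ifs with h
  · rw [h.neg_one_zpow]; simp; field_simp; norm_num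
  · rw [(Int.not_odd_iff_even.mp h).neg_one_zpow]; simp

lemma aux_cs (k m : ℕ) : ∫ x in (0:ℝ)..Real.pi, Real.cos ((k:ℝ) * x) * Real.sin ((m:ℝ) * x) =
    if Odd (k + m) then 1 / ((m:ℝ) + k) + 1 / ((m:ℝ) - k) else 0 := by
  have h : ∀ x : ℝ, Real.cos ((k:ℝ) * x) * Real.sin ((m:ℝ) * x) =
      (1/2) * (Real.sin ((((m:ℤ) + k : ℤ):ℝ) * x) + Real.sin ((((m:ℤ) - k : ℤ):ℝ) * x)) := by
    intro x
    push_cast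
    rw [add_mul, sub_mul, Real.sin_add, Real.sin_sub]; ring
  simp_rw [h]
  rw [intervalIntegral.integral_const_mul, intervalIntegral.integral_add
    (by apply Continuous.intervalIntegrable; fun_prop)
    (by apply Continuous.intervalIntegrable; fun_prop), aux_sin_int, aux_sin_int]
  have h1 : Odd ((m:ℤ) + k) ↔ Odd (k + m) := by
    rw [add_comm k m]; exact_mod_cast Int.odd_coe_nat (m + k)
  have h2 : Odd ((m:ℤ) - k) ↔ Odd (k + m) := by rw [← h1]; simp [Int.odd_sub, Int.odd_add]
  simp only [h1, h2]
  split_ifs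
  · push_cast; ring
  · simp

lemma aux_1d (e : Bool) (k m : ℕ) :
    ∫ x in Set.Icc (0:ℝ) Real.pi,
      (if e then (Real.cos ((k : ℝ) * x) : ℂ) else (Real.sin ((k : ℝ) * x) : ℂ)) *
      (if e then (Real.sin ((m : ℝ) * x) : ℂ) else (Real.cos ((m : ℝ) * x) : ℂ)) =
    if Odd (k + m) then (if e then 1 / ((m : ℂ) + (k : ℂ)) + 1 / ((m : ℂ) - (k : ℂ))
                else 1 / ((m : ℂ) + (k : ℂ)) + 1 / ((k : ℂ) - (m : ℂ))) else 0 := by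
  rw [integral_Icc_eq_integral_Ioc, ← intervalIntegral.integral_of_le Real.pi_pos.le]
  cases e
  · have := congrArg (fun r : ℝ => (r:ℂ)) (aux_cs m k)
    simp only [← intervalIntegral.integral_ofReal] at this
    simp only [Bool.false_eq_true, if_false]
    rw [add_comm k m, add_comm (m:ℂ) k]
    refine Eq.trans ?_ (this.trans ?_)
    · congr 1; funext x; push_cast; ring
    · split_ifs <;> push_cast <;> rfl
  · have := congrArg (fun r : ℝ => (r:ℂ)) (aux_cs k m)
    simp only [← intervalIntegral.integral_ofReal] at this
    simp only [if_true]
    refine Eq.trans ?_ (this.trans ?_)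
    · congr 1; funext x; push_cast; ring
    · split_ifs <;> push_cast <;> rfl

lemma aux_multi {d : ℕ} (η : Fin d → Bool) (k m : Fin d → ℕ) :
    ∫ x in Set.Icc (0 : Fin d → ℝ) (fun _ => Real.pi),
      (∏ j, (if η j then (Real.cos ((k j : ℝ) * x j) : ℂ)
                  else (Real.sin ((k j : ℝ) * x j) : ℂ))) *
       ∏ j, (if η j then (Real.sin ((m j : ℝ) * x j) : ℂ)
                      else (Real.cos ((m j : ℝ) * x j) : ℂ)) =
    if ∀ j, Odd (k j + m j) then
      ∏ j, (if η j then 1 / ((m j : ℂ) + (k j : ℂ)) + 1 / ((m j : ℂ) - (k j : ℂ))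
                else 1 / ((m j : ℂ) + (k j : ℂ)) + 1 / ((k j : ℂ) - (m j : ℂ))) else 0 := by
  have hI : Set.Icc (0 : Fin d → ℝ) (fun _ => Real.pi) =
      Set.pi Set.univ (fun _ => Set.Icc (0:ℝ) Real.pi) := by
    rw [Set.pi_univ_Icc]; rfl
  simp_rw [← Finset.prod_mul_distrib]
  rw [hI, volume_pi, Measure.restrict_pi_pi]
  rw [integral_fintype_prod_eq_prod (fun j (x:ℝ) =>
    (if η j then (Real.cos ((k j : ℝ) * x) : ℂ) else (Real.sin ((k j : ℝ) * x) : ℂ)) *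
      (if η j then (Real.sin ((m j : ℝ) * x) : ℂ) else (Real.cos ((m j : ℝ) * x) : ℂ)))]
  simp_rw [aux_1d]
  split_ifs with h
  · exact Finset.prod_congr rfl fun j _ => by rw [if_pos (h j)]
  · push Not at h
    obtain ⟨j, hj⟩ := h
    exact Finset.prod_eq_zero (Finset.mem_univ j) (by rw [if_neg (by simpa using hj)])

/-- multidimensional re-expansion coefficients coincide with
`(2/π)^d ℏ_η⁻a(m)`, and their summability is equivalent to that of `ℏ_η⁻a`. -/
theorem stmt_12 (d : ℕ) (hd : 1 ≤ d) (η : Fin d → Bool) (a : (Fin d → ℕ) → ℂ)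
    (ha : Summable fun k : Fin d → ℕ => if ∀ j, 1 ≤ k j then ‖a k‖ else 0)
    (f : (Fin d → ℝ) → ℂ)
    (hf : ∀ x : Fin d → ℝ, f x = ∑' k : Fin d → ℕ, if ∀ j, 1 ≤ k j then
      a k * ∏ j, (if η j then (Real.cos ((k j : ℝ) * x j) : ℂ)
                  else (Real.sin ((k j : ℝ) * x j) : ℂ)) else 0)
    (b : (Fin d → ℕ) → ℂ)
    (hb : ∀ m : Fin d → ℕ, (∀ j, 1 ≤ m j) →
      b m = ((2 / Real.pi : ℝ) : ℂ) ^ d *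
        ∫ x in Set.Icc (0 : Fin d → ℝ) (fun _ => Real.pi),
          f x * ∏ j, (if η j then (Real.sin ((m j : ℝ) * x j) : ℂ)
                      else (Real.cos ((m j : ℝ) * x j) : ℂ))) :
    (∀ m : Fin d → ℕ, (∀ j, 1 ≤ m j) →
      (Summable fun k : Fin d → ℕ => ‖if ∀ j, 1 ≤ k j ∧ Odd (k j + m j) then
        a k * ∏ j, (if η j then 1 / ((m j : ℂ) + (k j : ℂ)) + 1 / ((m j : ℂ) - (k j : ℂ))
                    else 1 / ((m j : ℂ) + (k j : ℂ)) + 1 / ((k j : ℂ) - (m j : ℂ)))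
        else 0‖) ∧
      b m = ((2 / Real.pi : ℝ) : ℂ) ^ d * hbarMinusMulti η a m) ∧
    ((Summable fun m : Fin d → ℕ => if ∀ j, 1 ≤ m j then ‖b m‖ else 0) ↔
      (Summable fun m : Fin d → ℕ =>
        if ∀ j, 1 ≤ m j then ‖hbarMinusMulti η a m‖ else 0)) := by
  classical
  have key : ∀ m : Fin d → ℕ, (∀ j, 1 ≤ m j) →
      (Summable fun k : Fin d → ℕ => ‖if ∀ j, 1 ≤ k j ∧ Odd (k j + m j) then
        a k * ∏ j, (if η j then 1 / ((m j : ℂ) + (k j : ℂ)) + 1 / ((m j : ℂ) - (k j : ℂ))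
                    else 1 / ((m j : ℂ) + (k j : ℂ)) + 1 / ((k j : ℂ) - (m j : ℂ)))
        else 0‖) ∧
      b m = ((2 / Real.pi : ℝ) : ℂ) ^ d * hbarMinusMulti η a m := by
    intro m hm
    set S := Set.Icc (0 : Fin d → ℝ) (fun _ => Real.pi) with hS
    have hSc : IsCompact S := isCompact_Icc
    let F : (Fin d → ℕ) → (Fin d → ℝ) → ℂ := fun k x =>
      (if ∀ j, 1 ≤ k j then a k else 0) *
      ((∏ j, (if η j then (Real.cos ((k j : ℝ) * x j) : ℂ)
                  else (Real.sin ((k j : ℝ) * x j) : ℂ))) *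
       ∏ j, (if η j then (Real.sin ((m j : ℝ) * x j) : ℂ)
                      else (Real.cos ((m j : ℝ) * x j) : ℂ)))
    have hFc : ∀ k, Continuous (F k) := by
      intro k
      refine continuous_const.mul (Continuous.mul ?_ ?_) <;>
      · refine continuous_finsetProd _ fun j _ => ?_
        split_ifs <;> fun_prop
    have hFi : ∀ k, Integrable (F k) (volume.restrict S) := fun k =>
      (hFc k).continuousOn.integrableOn_compact hSc
    have hFb : ∀ k x, ‖F k x‖ ≤ if ∀ j, 1 ≤ k j then ‖a k‖ else 0 := by
      intro k x
      have h1 : ‖∏ j, (if η j then (Real.cos ((k j : ℝ) * x j) : ℂ)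
                  else (Real.sin ((k j : ℝ) * x j) : ℂ))‖ ≤ 1 := by
        rw [norm_prod]
        refine Finset.prod_le_one (fun _ _ => norm_nonneg _) fun j _ => ?_
        split_ifs
        · rw [Complex.norm_real]; exact Real.abs_cos_le_one _
        · rw [Complex.norm_real]; exact Real.abs_sin_le_one _
      have h2 : ‖∏ j, (if η j then (Real.sin ((m j : ℝ) * x j) : ℂ)
                      else (Real.cos ((m j : ℝ) * x j) : ℂ))‖ ≤ 1 := by
        rw [norm_prod]
        refine Finset.prod_le_one (fun _ _ => norm_nonneg _) fun j _ => ?_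
        split_ifs
        · rw [Complex.norm_real]; exact Real.abs_sin_le_one _
        · rw [Complex.norm_real]; exact Real.abs_cos_le_one _
      calc ‖F k x‖ ≤ ‖if ∀ j, 1 ≤ k j then a k else 0‖ * 1 := by
            simp only [F]
            rw [norm_mul]
            refine mul_le_mul_of_nonneg_left ?_ (norm_nonneg _)
            rw [norm_mul]
            exact mul_le_one₀ h1 (norm_nonneg _) h2
        _ = _ := by split_ifs <;> simp
    have hFs : Summable fun k => ∫ x in S, ‖F k x‖ := by
      refine Summable.of_nonneg_of_le (fun k => integral_nonneg fun _ => norm_nonneg _)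
        (fun k => ?_) (ha.mul_left (volume.real S))
      have : IsFiniteMeasure (volume.restrict S) := ⟨by
        rw [Measure.restrict_apply_univ]; exact hSc.measure_lt_top⟩
      refine (integral_mono (hFi k).norm (integrable_const _) (hFb k)).trans ?_
      simp
    have hval : ∀ k, ∫ x in S, F k x = if ∀ j, 1 ≤ k j ∧ Odd (k j + m j) then
        a k * ∏ j, (if η j then 1 / ((m j : ℂ) + (k j : ℂ)) + 1 / ((m j : ℂ) - (k j : ℂ))
                    else 1 / ((m j : ℂ) + (k j : ℂ)) + 1 / ((k j : ℂ) - (m j : ℂ)))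
        else 0 := by
      intro k
      simp only [F]
      rw [integral_const_mul, aux_multi]
      by_cases h1 : ∀ j, 1 ≤ k j <;> by_cases h2 : ∀ j, Odd (k j + m j) <;>
        simp only [forall_and, h1, h2, and_self, and_true, true_and, false_and, and_false, if_true, if_false,
          mul_zero, zero_mul, implies_true]
    refine ⟨?_, ?_⟩
    · refine Summable.of_nonneg_of_le (fun k => norm_nonneg _) (fun k => ?_) hFs
      rw [← hval k]
      exact norm_integral_le_integral_norm _
    · rw [hb m hm, hbarMinusMulti]
      congr 1
      rw [← tsum_congr hval, integral_tsum_of_summable_integral_norm hFi hFs]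
      congr 1
      funext x
      rw [hf x, ← tsum_mul_right]
      refine tsum_congr fun k => ?_
      simp only [F]
      split_ifs <;> ring
  refine ⟨key, ?_⟩
  have hc : ‖((2 / Real.pi : ℝ) : ℂ) ^ d‖ ≠ 0 := by
    have := Real.pi_ne_zero
    simp [this]
  rw [← summable_mul_left_iff hc (f := fun m : Fin d → ℕ =>
        if ∀ j, 1 ≤ m j then ‖hbarMinusMulti η a m‖ else 0)]
  refine summable_congr fun m => ?_
  split_ifs with h
  · rw [(key m h).2, norm_mul]
  · simp
end

section
/- Let d ≥ 1, η ∈ {0,1}^d, and let a = (a_k)_{k∈ℕ₊^d} be complex numbers with Σ_k |a_k| · ∏_{j=1}^d log(k_j + 1) < ∞. Let f(x) = Σ_k a_k · (∏_{j:η_j=1} cos(k_j x_j)) · (∏_{j:η_j=0} sin(k_j x_j)) on [0,π]^d, and assume f vanishes on every face of the cube, i.e. f(x) = 0 whenever x_j ∈ {0, π} for some j. Then the re-expansion coefficients b_m = (2/π)^d ∫_{[0,π]^d} f(x) · (∏_{j:η_j=0} cos(m_j x_j)) · (∏_{j:η_j=1} sin(m_j x_j)) dx satisfy Σ_{m∈ℕ₊^d}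 |b_m| < ∞. -/
open MeasureTheory

namespace S15

noncomputable def lam : Measure ℝ :=
  volume.restrict (Set.Icc 0 Real.pi) + Measure.dirac 0 + Measure.dirac Real.pi

instance : IsFiniteMeasure lam := by unfold lam; infer_instance

noncomputable def phi (e : Bool) (k : ℕ) (x : ℝ) : ℝ :=
  if e then Real.cos (k * x) else Real.sin (k * x)

noncomputable def w (e : Bool) (m : ℕ) (x : ℝ) : ℝ :=
  if e then (if x = 0 then -1 / (m : ℝ) else if x = Real.pi then Real.cos (m * Real.pi) / m
    else Real.sin (m * x)) else Real.cos (m * x)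

noncomputable def B (k m : ℕ) : ℝ := 2 * k / (m * |(k : ℝ) - m|)

lemma B_nonneg (k m : ℕ) : 0 ≤ B k m := by unfold B; positivity

lemma phi_meas (e : Bool) (k : ℕ) : Measurable (phi e k) := by
  unfold phi; cases e <;> simp <;> fun_prop

lemma w_meas (e : Bool) (m : ℕ) : Measurable (w e m) := by
  unfold w
  cases e
  · simp; fun_prop
  · simp only [if_true]
    refine Measurable.ite (measurableSet_eq) measurable_const ?_
    exact Measurable.ite (measurableSet_eq) measurable_const (by fun_prop)

lemma phi_le (e : Bool) (k : ℕ) (x : ℝ) : |phi e k x| ≤ 1 := by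
  unfold phi; cases e <;> simp [Real.abs_cos_le_one, Real.abs_sin_le_one]

lemma w_le (e : Bool) (m : ℕ) (hm : 1 ≤ m) (x : ℝ) : |w e m x| ≤ 1 := by
  have h1 : (1 : ℝ) ≤ m := by exact_mod_cast hm
  unfold w; cases e
  · simp [Real.abs_cos_le_one]
  · simp only [if_true]
    split_ifs
    · rw [abs_div, abs_neg, abs_one, abs_of_pos (by linarith), div_le_one (by linarith)]; exact h1
    · rw [abs_div, abs_of_pos (a := (m : ℝ)) (by linarith), div_le_one (by linarith)]
      exact (Real.abs_cos_le_one _).trans h1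
    · exact Real.abs_sin_le_one _

lemma J_ne (k m : ℕ) (hk : 1 ≤ k) (hm : 1 ≤ m) (h : k ≠ m) :
    ∫ x in (0 : ℝ)..Real.pi, Real.sin (k * x) * Real.cos (m * x) =
      (1 - Real.cos (k * Real.pi) * Real.cos (m * Real.pi)) * (k / ((k : ℝ) ^ 2 - m ^ 2)) := by
  have h1 : (1 : ℝ) ≤ m := by exact_mod_cast hm
  have h2 : (1 : ℝ) ≤ k := by exact_mod_cast hk
  have hs : (k : ℝ) + m ≠ 0 := by positivity
  have hd : (k : ℝ) - m ≠ 0 := sub_ne_zero.2 (by exact_mod_cast h)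
  have hd2 : (k : ℝ) ^ 2 - m ^ 2 ≠ 0 := by
    rw [sq_sub_sq]; exact mul_ne_zero hs hd
  have key : ∀ x ∈ Set.uIcc (0 : ℝ) Real.pi, HasDerivAt
      (fun x : ℝ => -(Real.cos ((k + m : ℝ) * x) / (2 * (k + m)) + Real.cos ((k - m : ℝ) * x) / (2 * (k - m))))
      (Real.sin (k * x) * Real.cos (m * x)) x := by
    intro x _
    have e1 := (((hasDerivAt_id x).const_mul (k + m : ℝ)).cos).div_const (2 * (k + m : ℝ))
    have e2 := (((hasDerivAt_id x).const_mul (k - m : ℝ)).cos).div_const (2 * (k - m : ℝ))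
    refine (e1.add e2).neg.congr_deriv ?_
    simp only [id, add_mul, sub_mul, Real.sin_add, Real.sin_sub]
    field_simp
    ring
  rw [intervalIntegral.integral_eq_sub_of_hasDerivAt key
    (by apply Continuous.intervalIntegrable; fun_prop)]
  simp only [add_mul, sub_mul, Real.cos_add, Real.cos_sub, Real.sin_nat_mul_pi, mul_zero, Real.cos_zero]
  field_simp
  ring

lemma J_eq (k : ℕ) (hk : 1 ≤ k) :
    ∫ x in (0 : ℝ)..Real.pi, Real.sin (k * x) * Real.cos (k * x) = 0 := by
  have h2 : (1 : ℝ) ≤ k := by exact_mod_cast hk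
  have key : ∀ x ∈ Set.uIcc (0 : ℝ) Real.pi, HasDerivAt
      (fun x : ℝ => Real.sin (k * x) ^ 2 / (2 * k))
      (Real.sin (k * x) * Real.cos (k * x)) x := by
    intro x _
    have e1 := ((((hasDerivAt_id x).const_mul (k : ℝ)).sin).pow 2).div_const (2 * k : ℝ)
    refine e1.congr_deriv ?_
    simp only [id]
    field_simp
    norm_num
    ring
  rw [intervalIntegral.integral_eq_sub_of_hasDerivAt key
    (by apply Continuous.intervalIntegrable; fun_prop)]
  simp [Real.sin_nat_mul_pi]

lemma integrable_bdd {α : Type*} [MeasurableSpace α] (μ : Measure α) [IsFiniteMeasure μ] (g : α → ℝ)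
    (hg : Measurable g) (C : ℝ) (h : ∀ x, |g x| ≤ C) : Integrable g μ :=
  Integrable.of_bound hg.aestronglyMeasurable C (Filter.Eventually.of_forall h)

lemma pw_int (e : Bool) (k m : ℕ) (hm : 1 ≤ m) (μ : Measure ℝ) [IsFiniteMeasure μ] :
    Integrable (fun x => phi e k x * w e m x) μ := by
  refine integrable_bdd μ _ ((phi_meas e k).mul (w_meas e m)) 1 fun x => ?_
  rw [abs_mul]
  exact mul_le_one₀ (phi_le e k x) (abs_nonneg _) (w_le e m hm x)

lemma K_split (e : Bool) (k m : ℕ) (hm : 1 ≤ m) :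
    ∫ x, phi e k x * w e m x ∂lam = (∫ x in (0 : ℝ)..Real.pi, phi e k x * w e m x)
      + phi e k 0 * w e m 0 + phi e k Real.pi * w e m Real.pi := by
  unfold lam
  rw [integral_add_measure (pw_int e k m hm _) (pw_int e k m hm _),
    integral_add_measure (pw_int e k m hm _) (pw_int e k m hm _),
    integral_dirac, integral_dirac, intervalIntegral.integral_of_le Real.pi_pos.le,
    integral_Icc_eq_integral_Ioc]

lemma K_bound (e : Bool) (k m : ℕ) (hk : 1 ≤ k) (hm : 1 ≤ m) :
    |∫ x, phi e k x * w e m x ∂lam| ≤ B k m := by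
  have h1 : (1 : ℝ) ≤ m := by exact_mod_cast hm
  have h2 : (1 : ℝ) ≤ k := by exact_mod_cast hk
  have hs : 0 < (k : ℝ) + m := by positivity
  have hp : |1 - Real.cos (k * Real.pi) * Real.cos (m * Real.pi)| ≤ 2 := by
    have h3 : |Real.cos (k * Real.pi) * Real.cos (m * Real.pi)| ≤ 1 := by
      rw [abs_mul]
      exact mul_le_one₀ (Real.abs_cos_le_one _) (abs_nonneg _) (Real.abs_cos_le_one _)
    rw [abs_le] at *
    constructor <;> linarith [h3.1, h3.2]
  rw [K_split e k m hm]
  cases e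
  · simp only [phi, w, Bool.false_eq_true, if_false, Real.sin_nat_mul_pi, mul_zero, Real.sin_zero, zero_mul, add_zero]
    by_cases h : k = m
    · subst h; rw [J_eq k hk]; simp [B]
    · have hd : 0 < |(k : ℝ) - m| := abs_pos.2 (sub_ne_zero.2 (by exact_mod_cast h))
      rw [J_ne k m hk hm h, abs_mul]
      calc _ ≤ 2 * |k / ((k : ℝ) ^ 2 - m ^ 2)| := by gcongr
        _ = 2 * k / ((k + m) * |(k : ℝ) - m|) := by
            rw [abs_div, sq_sub_sq, abs_mul, abs_of_pos hs, abs_of_pos (a := (k : ℝ)) (by linarith)]; ring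
        _ ≤ _ := by unfold B; gcongr; linarith
  · have hI : ∫ x in (0 : ℝ)..Real.pi, phi true k x * w true m x =
        ∫ x in (0 : ℝ)..Real.pi, Real.sin (m * x) * Real.cos (k * x) := by
      rw [intervalIntegral.integral_of_le Real.pi_pos.le, intervalIntegral.integral_of_le Real.pi_pos.le,
        integral_Ioc_eq_integral_Ioo, integral_Ioc_eq_integral_Ioo]
      refine setIntegral_congr_fun measurableSet_Ioo fun x hx => ?_
      simp [phi, w, hx.1.ne', hx.2.ne, mul_comm]
    rw [hI]
    simp only [phi, w, if_true, Real.pi_ne_zero, if_false, mul_zero, Real.cos_zero]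
    by_cases h : k = m
    · subst h; rw [J_eq k hk]
      have : Real.cos (k * Real.pi) * Real.cos (k * Real.pi) = 1 := by
        have := Real.sin_sq_add_cos_sq (k * Real.pi)
        rw [Real.sin_nat_mul_pi] at this; nlinarith
      rw [← mul_div_assoc (Real.cos _), this]
      simp [B, neg_div]
    · have hd' : (k : ℝ) - m ≠ 0 := (sub_ne_zero.2 (by exact_mod_cast h))
      have hd : 0 < |(k : ℝ) - m| := abs_pos.2 hd'
      have hd2 : (m : ℝ) ^ 2 - k ^ 2 ≠ 0 := by
        rw [sq_sub_sq]; exact mul_ne_zero (by positivity) (by intro h; apply hd'; linarith)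
      rw [J_ne m k hm hk (Ne.symm h)]
      have : (1 - Real.cos (m * Real.pi) * Real.cos (k * Real.pi)) * (m / ((m : ℝ) ^ 2 - k ^ 2)) +
          1 * (-1 / (m : ℝ)) + Real.cos (k * Real.pi) * (Real.cos (m * Real.pi) / m) =
          (1 - Real.cos (k * Real.pi) * Real.cos (m * Real.pi)) * (k ^ 2 / (m * ((m : ℝ) ^ 2 - k ^ 2))) := by
        field_simp
        ring
      rw [this, abs_mul]
      calc _ ≤ 2 * |k ^ 2 / (m * ((m : ℝ) ^ 2 - k ^ 2))| := by gcongr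
        _ = (2 * k / (m * |(k : ℝ) - m|)) * (k / (k + m)) := by
            rw [abs_div, abs_mul, abs_sub_comm, sq_sub_sq, abs_mul, abs_of_pos hs, abs_of_pos (a := (m : ℝ)) (by linarith), abs_of_nonneg (a := (k : ℝ) ^ 2) (by positivity)]
            field_simp
        _ ≤ (2 * k / (m * |(k : ℝ) - m|)) * 1 := by
            gcongr
            rw [div_le_one hs]; linarith
        _ = _ := by unfold B; ring

lemma sum_lt (k : ℕ) : ∑ m ∈ Finset.range k, B k m ≤ 4 * ∑ i ∈ Finset.range k, ((i : ℝ) + 1)⁻¹ := by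
  have h : ∀ m ∈ Finset.range k, B k m ≤ 2 * (m : ℝ)⁻¹ + 2 * ((k - 1 - m : ℕ) + 1 : ℝ)⁻¹ := by
    intro m hm
    have hm := Finset.mem_range.1 hm
    have e : ((k - 1 - m : ℕ) + 1 : ℝ) = k - m := by
      have : k - 1 - m + 1 + m = k := by omega
      have : ((k - 1 - m : ℕ) : ℝ) + 1 + m = k := by exact_mod_cast this
      linarith
    have hp : (0 : ℝ) < k - m := sub_pos.2 (by exact_mod_cast hm)
    rw [e]
    rcases Nat.eq_zero_or_pos m with rfl | h0
    · simp [B]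
    · have h0 : (0 : ℝ) < m := by exact_mod_cast h0
      unfold B
      rw [abs_of_pos hp]
      apply le_of_eq
      field_simp
      ring
  refine (Finset.sum_le_sum h).trans ?_
  rw [Finset.sum_add_distrib, ← Finset.mul_sum, ← Finset.mul_sum,
    Finset.sum_range_reflect (fun j : ℕ => ((j : ℝ) + 1)⁻¹) k]
  have : ∑ i ∈ Finset.range k, (i : ℝ)⁻¹ ≤ ∑ i ∈ Finset.range k, ((i : ℝ) + 1)⁻¹ := by
    have a1 := Finset.sum_range_succ (fun i : ℕ => (i : ℝ)⁻¹) k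
    have a2 := Finset.sum_range_succ' (fun i : ℕ => (i : ℝ)⁻¹) k
    have : (0 : ℝ) ≤ (k : ℝ)⁻¹ := by positivity
    push_cast at a2
    simp only [inv_zero] at a2
    linarith
  linarith

lemma sum_gt (k : ℕ) (N : ℕ) : ∑ i ∈ Finset.range N, B k (k + 1 + i)
    ≤ 2 * ∑ i ∈ Finset.range k, ((i : ℝ) + 1)⁻¹ := by
  have h : ∀ i ∈ Finset.range N, B k (k + 1 + i) = 2 * ((i : ℝ) + 1)⁻¹ - 2 * (((k + i : ℕ) : ℝ) + 1)⁻¹ := by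
    intro i _
    unfold B
    push_cast
    rw [show (k : ℝ) - (k + 1 + i) = -(1 + i) by ring, abs_neg, abs_of_pos (by positivity)]
    field_simp
    ring
  rw [Finset.sum_congr rfl h, Finset.sum_sub_distrib, ← Finset.mul_sum, ← Finset.mul_sum]
  have e := Finset.sum_range_add (fun i : ℕ => ((i : ℝ) + 1)⁻¹) k N
  have : ∑ i ∈ Finset.range N, ((i : ℝ) + 1)⁻¹ ≤ ∑ i ∈ Finset.range (k + N), ((i : ℝ) + 1)⁻¹ := by
    apply Finset.sum_le_sum_of_subset_of_nonneg
    · intro x; simp; omega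
    · intros; positivity
  linarith

lemma sum_B : ∃ C : ℝ, 0 ≤ C ∧ ∀ k N : ℕ, 1 ≤ k →
    ∑ m ∈ Finset.range N, B k m ≤ C * Real.log ((k : ℝ) + 1) := by
  have hl2 : 0 < Real.log 2 := Real.log_pos (by norm_num)
  refine ⟨6 * (1 / Real.log 2 + 1), by positivity, fun k N hk => ?_⟩
  have hk' : (1 : ℝ) ≤ k := by exact_mod_cast hk
  have h1 : ∑ m ∈ Finset.range N, B k m ≤ ∑ m ∈ Finset.range (k + 1 + N), B k m := by
    apply Finset.sum_le_sum_of_subset_of_nonneg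
    · intro x; simp; omega
    · intros; exact B_nonneg _ _
  rw [Finset.sum_range_add, Finset.sum_range_succ] at h1
  have h0 : B k k = 0 := by simp [B]
  have hH : ∑ i ∈ Finset.range k, ((i : ℝ) + 1)⁻¹ ≤ 1 + Real.log k := by
    have := harmonic_le_one_add_log k
    simpa [harmonic] using this
  have h2 : Real.log k ≤ Real.log (k + 1) := Real.log_le_log (by linarith) (by linarith)
  have h3 : Real.log 2 ≤ Real.log (k + 1) := Real.log_le_log (by norm_num) (by linarith)
  have h4 : 1 ≤ 1 / Real.log 2 * Real.log (k + 1) := by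
    rw [one_div, inv_mul_eq_div, one_le_div hl2]; exact h3
  have := sum_lt k
  have := sum_gt k N
  nlinarith

lemma lam_Icc : lam.restrict (Set.Icc 0 Real.pi) = lam := by
  unfold lam
  simp [Measure.restrict_add, MeasureTheory.restrict_dirac', measurableSet_Icc, Real.pi_pos.le]

lemma lam_Ioo : lam.restrict (Set.Ioo 0 Real.pi) = volume.restrict (Set.Ioo 0 Real.pi) := by
  unfold lam
  rw [Measure.restrict_add, Measure.restrict_add, Measure.restrict_restrict measurableSet_Ioo,
    Set.inter_eq_left.2 Set.Ioo_subset_Icc_self]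
  simp [MeasureTheory.restrict_dirac', measurableSet_Ioo]

lemma int_lam (d : ℕ) (f : (Fin d → ℝ) → ℂ)
    (hface : ∀ x : Fin d → ℝ, (∃ j : Fin d, x j = 0 ∨ x j = Real.pi) → f x = 0)
    (η : Fin d → Bool) (m : Fin d → ℕ) :
    ∫ x in Set.Icc (0 : Fin d → ℝ) (fun _ => Real.pi),
          f x * ∏ j, (if η j then (Real.sin ((m j : ℝ) * x j) : ℂ)
                      else (Real.cos ((m j : ℝ) * x j) : ℂ)) =
    ∫ x, f x * ((∏ j, w (η j) (m j) (x j) : ℝ) : ℂ) ∂(Measure.pi fun _ : Fin d => lam) := by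
  have h1 : (Measure.pi fun _ : Fin d => lam) = (Measure.pi fun _ : Fin d => lam).restrict
      (Set.univ.pi fun _ => Set.Icc 0 Real.pi) := by
    rw [Measure.restrict_pi_pi, lam_Icc]
  rw [h1, setIntegral_eq_of_subset_of_forall_sdiff_eq_zero
      (s := Set.univ.pi fun _ => Set.Ioo 0 Real.pi)
      (MeasurableSet.univ_pi fun _ => measurableSet_Icc)
      (Set.pi_mono fun _ _ => Set.Ioo_subset_Icc_self),
    Measure.restrict_pi_pi, lam_Ioo, ← Measure.restrict_pi_pi]
  · rw [volume_pi, ← setIntegral_congr_set (Measure.univ_pi_Ioo_ae_eq_Icc (μ := fun _ : Fin d => (volume : Measure ℝ)))]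
    refine setIntegral_congr_fun (MeasurableSet.univ_pi fun _ => measurableSet_Ioo) fun x hx => ?_
    congr 1
    push_cast
    refine Finset.prod_congr rfl fun j _ => ?_
    have hj := hx j (Set.mem_univ j)
    have h0 : x j ≠ 0 := hj.1.ne'
    have h2 : x j ≠ Real.pi := hj.2.ne
    cases η j <;> simp [w, h0, h2]
  · rintro x ⟨hx, hx'⟩
    rw [hface x, zero_mul]
    by_contra hcon
    push Not at hcon
    apply hx'
    intro j _
    have := hx j (Set.mem_univ j)
    exact ⟨lt_of_le_of_ne this.1 (hcon j).1.symm, lt_of_le_of_ne this.2 (hcon j).2⟩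

lemma norm_prod_le (d : ℕ) (η : Fin d → Bool) (k m : Fin d → ℕ) (hm : ∀ j, 1 ≤ m j) (x : Fin d → ℝ) :
    |∏ j, (phi (η j) (k j) (x j) * w (η j) (m j) (x j))| ≤ 1 := by
  rw [Finset.abs_prod]
  refine Finset.prod_le_one (fun _ _ => abs_nonneg _) fun j _ => ?_
  rw [abs_mul]
  exact mul_le_one₀ (phi_le _ _ _) (abs_nonneg _) (w_le _ _ (hm j) _)

lemma expansion (d : ℕ) (η : Fin d → Bool) (A : (Fin d → ℕ) → ℂ) (hA : Summable fun k => ‖A k‖)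
    (f : (Fin d → ℝ) → ℂ)
    (hf : ∀ x, f x = ∑' k, A k * ((∏ j, phi (η j) (k j) (x j) : ℝ) : ℂ))
    (m : Fin d → ℕ) (hm : ∀ j, 1 ≤ m j) :
    HasSum (fun k => A k * ((∏ j, ∫ x, phi (η j) (k j) x * w (η j) (m j) x ∂lam : ℝ) : ℂ))
      (∫ x, f x * ((∏ j, w (η j) (m j) (x j) : ℝ) : ℂ) ∂(Measure.pi fun _ : Fin d => lam)) := by
  set μ := Measure.pi fun _ : Fin d => lam with hμ
  set F : (Fin d → ℕ) → (Fin d → ℝ) → ℂ := fun k x =>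
    A k * ((∏ j, (phi (η j) (k j) (x j) * w (η j) (m j) (x j)) : ℝ) : ℂ)
  have hint : ∀ k : Fin d → ℕ, Integrable (fun x : Fin d → ℝ =>
      (∏ j, (phi (η j) (k j) (x j) * w (η j) (m j) (x j)) : ℝ)) μ := fun k => by
    refine integrable_bdd μ _ ?_ 1 (norm_prod_le d η k m hm)
    refine Finset.measurable_prod _ fun j _ => ?_
    exact ((phi_meas _ _).comp (measurable_pi_apply j)).mul ((w_meas _ _).comp (measurable_pi_apply j))
  have hFi : ∀ k, Integrable (F k) μ := fun k => ((hint k).ofReal (𝕜 := ℂ)).const_mul _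
  have hle : ∀ k x, ‖F k x‖ ≤ ‖A k‖ := fun k x => by
    simp only [F, norm_mul, Complex.norm_real, Real.norm_eq_abs]
    exact mul_le_of_le_one_right (norm_nonneg _) (norm_prod_le d η k m hm x)
  have hs : Summable fun k => ∫ x, ‖F k x‖ ∂μ := by
    refine Summable.of_nonneg_of_le (fun k => integral_nonneg fun _ => norm_nonneg _) (fun k => ?_)
      (hA.mul_left (μ.real Set.univ))
    calc _ ≤ ∫ _, ‖A k‖ ∂μ := integral_mono (hFi k).norm (integrable_const _) (hle k)
      _ = _ := by simp
  have := hasSum_integral_of_summable_integral_norm hFi hs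
  have e1 : ∀ k, ∫ x, F k x ∂μ =
      A k * ((∏ j, ∫ x, phi (η j) (k j) x * w (η j) (m j) x ∂lam : ℝ) : ℂ) := fun k => by
    simp only [F]
    rw [integral_const_mul, integral_complex_ofReal, hμ,
      integral_fintype_prod_eq_prod (fun j x => phi (η j) (k j) x * w (η j) (m j) x)]
  have e2 : (fun x => ∑' k, F k x) = fun x => f x * ((∏ j, w (η j) (m j) (x j) : ℝ) : ℂ) := by
    funext x
    rw [hf x, ← tsum_mul_right]
    congr 1
    funext k
    simp only [F, Finset.prod_mul_distrib]
    push_cast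
    ring
  rw [e2] at this
  simp only [e1] at this
  exact this

end S15

open S15 in
/-- multidimensional logarithmic sufficient condition: if
`Σ_k |a_k| ∏_j log(k_j+1) < ∞` and `f` vanishes on every face of the cube,
then the re-expansion coefficients are absolutely summable. -/
theorem stmt_15 (d : ℕ) (hd : 1 ≤ d) (η : Fin d → Bool) (a : (Fin d → ℕ) → ℂ)
    (ha : Summable fun k : Fin d → ℕ =>
      if ∀ j, 1 ≤ k j then ‖a k‖ * ∏ j, Real.log ((k j : ℝ) + 1) else 0)
    (f : (Fin d → ℝ) → ℂ)
    (hf : ∀ x : Fin d → ℝ, f x = ∑' k : Fin d → ℕ, if ∀ j, 1 ≤ k j then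
      a k * ∏ j, (if η j then (Real.cos ((k j : ℝ) * x j) : ℂ)
                  else (Real.sin ((k j : ℝ) * x j) : ℂ)) else 0)
    (hface : ∀ x : Fin d → ℝ, (∃ j : Fin d, x j = 0 ∨ x j = Real.pi) → f x = 0)
    (b : (Fin d → ℕ) → ℂ)
    (hb : ∀ m : Fin d → ℕ, (∀ j, 1 ≤ m j) →
      b m = ((2 / Real.pi : ℝ) : ℂ) ^ d *
        ∫ x in Set.Icc (0 : Fin d → ℝ) (fun _ => Real.pi),
          f x * ∏ j, (if η j then (Real.sin ((m j : ℝ) * x j) : ℂ)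
                      else (Real.cos ((m j : ℝ) * x j) : ℂ))) :
    Summable fun m : Fin d → ℕ => if ∀ j, 1 ≤ m j then ‖b m‖ else 0 := by
  obtain ⟨C, hC, hCB⟩ := sum_B
  have hl2 : 0 < Real.log 2 := Real.log_pos (by norm_num)
  set A : (Fin d → ℕ) → ℂ := fun k => if ∀ j, 1 ≤ k j then a k else 0 with hAdef
  have haA : Summable fun k : Fin d → ℕ => ‖A k‖ * ∏ j, Real.log ((k j : ℝ) + 1) := by
    refine ha.congr fun k => ?_
    simp only [hAdef]
    split_ifs <;> simp
  have hA : Summable fun k => ‖A k‖ := by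
    refine Summable.of_nonneg_of_le (fun k => norm_nonneg _) (fun k => ?_)
      (haA.mul_left ((Real.log 2 ^ d)⁻¹))
    by_cases hk : ∀ j, 1 ≤ k j
    · have : Real.log 2 ^ d ≤ ∏ j, Real.log ((k j : ℝ) + 1) := by
        calc Real.log 2 ^ d = ∏ _j : Fin d, Real.log 2 := by simp
          _ ≤ _ := by
            refine Finset.prod_le_prod (fun _ _ => hl2.le) fun j _ => ?_
            have : (1 : ℝ) ≤ k j := by exact_mod_cast hk j
            exact Real.log_le_log (by norm_num) (by linarith)
      rw [inv_mul_eq_div, le_div_iff₀ (by positivity)]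
      gcongr
    · simp [hAdef, hk]
  have hf' : ∀ x, f x = ∑' k, A k * ((∏ j, phi (η j) (k j) (x j) : ℝ) : ℂ) := by
    intro x
    rw [hf x]
    congr 1
    funext k
    simp only [hAdef]
    split_ifs
    · congr 1
      push_cast
      refine Finset.prod_congr rfl fun j _ => ?_
      cases η j <;> simp [phi]
    · simp
  -- termwise bound, for every k
  have hterm : ∀ m : Fin d → ℕ, (∀ j, 1 ≤ m j) → ∀ k,
      ‖A k * ((∏ j, ∫ x, phi (η j) (k j) x * w (η j) (m j) x ∂lam : ℝ) : ℂ)‖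
        ≤ ‖A k‖ * ∏ j, B (k j) (m j) := by
    intro m hm k
    by_cases hk : ∀ j, 1 ≤ k j
    · rw [norm_mul, Complex.norm_real, Real.norm_eq_abs, Finset.abs_prod]
      gcongr with j
      exact K_bound _ _ _ (hk j) (hm j)
    · simp [hAdef, hk]
  have hbox : ∀ N : ℕ, ∀ k, ∑ m ∈ Fintype.piFinset (fun _ : Fin d => Finset.range N),
      ‖A k‖ * ∏ j, B (k j) (m j) ≤ C ^ d * (‖A k‖ * ∏ j, Real.log ((k j : ℝ) + 1)) := by
    intro N k
    by_cases hk : ∀ j, 1 ≤ k j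
    · rw [← Finset.mul_sum, ← Finset.prod_univ_sum (fun _ : Fin d => Finset.range N) (fun j m => B (k j) m)]
      calc _ ≤ ‖A k‖ * ∏ j, (C * Real.log ((k j : ℝ) + 1)) := by
            gcongr with j
            · exact fun j _ => Finset.sum_nonneg fun _ _ => B_nonneg _ _
            · exact hCB _ _ (hk j)
        _ = _ := by rw [Finset.prod_mul_distrib]; simp; ring
    · simp [hAdef, hk]
  have hsumm : ∀ m : Fin d → ℕ, Summable fun k => ‖A k‖ * ∏ j, B (k j) (m j) := by
    intro m
    refine Summable.of_nonneg_of_le (fun k => ?_) (fun k => ?_) (haA.mul_left (C ^ d))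
    · exact mul_nonneg (norm_nonneg _) (Finset.prod_nonneg fun _ _ => B_nonneg _ _)
    · refine le_trans ?_ (hbox ((∑ j, m j) + 1) k)
      refine Finset.single_le_sum (f := fun m : Fin d → ℕ => ‖A k‖ * ∏ j, B (k j) (m j))
        (fun m _ => mul_nonneg (norm_nonneg _) (Finset.prod_nonneg fun _ _ => B_nonneg _ _)) ?_
      simp only [Fintype.mem_piFinset, Finset.mem_range]
      intro j
      exact Nat.lt_succ_of_le (Finset.single_le_sum (f := m) (fun _ _ => Nat.zero_le _) (Finset.mem_univ j))
  have hbm : ∀ m : Fin d → ℕ, (if ∀ j, 1 ≤ m j then ‖b m‖ else 0) ≤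
      (2 / Real.pi) ^ d * ∑' k, ‖A k‖ * ∏ j, B (k j) (m j) := by
    intro m
    have h0 : 0 ≤ ∑' k, ‖A k‖ * ∏ j, B (k j) (m j) := tsum_nonneg fun k =>
      mul_nonneg (norm_nonneg _) (Finset.prod_nonneg fun _ _ => B_nonneg _ _)
    have hpi := Real.pi_pos
    split_ifs with hm
    · rw [hb m hm, int_lam d f hface η m, ← (expansion d η A hA f hf' m hm).tsum_eq, norm_mul, norm_pow,
        Complex.norm_real, Real.norm_of_nonneg (by positivity)]
      gcongr
      exact tsum_of_norm_bounded (hsumm m).hasSum (hterm m hm)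
    · positivity
  refine summable_of_sum_le (c := (2 / Real.pi) ^ d * ∑' k, C ^ d * (‖A k‖ * ∏ j, Real.log ((k j : ℝ) + 1)))
    (fun m => by simp only [Pi.zero_apply]; split_ifs <;> simp) fun s => ?_
  obtain ⟨N, hN⟩ : ∃ N, s ⊆ Fintype.piFinset (fun _ : Fin d => Finset.range N) := by
    refine ⟨(s.sup fun m => ∑ j, m j) + 1, fun m hm => ?_⟩
    simp only [Fintype.mem_piFinset, Finset.mem_range]
    intro j
    refine Nat.lt_succ_of_le ?_
    exact (Finset.single_le_sum (f := m) (fun _ _ => Nat.zero_le _) (Finset.mem_univ j)).trans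
      (Finset.le_sup (f := fun m : Fin d → ℕ => ∑ j, m j) hm)
  have hpi := Real.pi_pos
  calc _ ≤ ∑ m ∈ s, (2 / Real.pi) ^ d * ∑' k, ‖A k‖ * ∏ j, B (k j) (m j) :=
        Finset.sum_le_sum fun m _ => hbm m
    _ ≤ ∑ m ∈ Fintype.piFinset (fun _ : Fin d => Finset.range N),
          (2 / Real.pi) ^ d * ∑' k, ‖A k‖ * ∏ j, B (k j) (m j) := by
        refine Finset.sum_le_sum_of_subset_of_nonneg hN fun m _ _ => ?_
        exact mul_nonneg (by positivity) (tsum_nonneg fun k =>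
          mul_nonneg (norm_nonneg _) (Finset.prod_nonneg fun _ _ => B_nonneg _ _))
    _ = (2 / Real.pi) ^ d * ∑' k, ∑ m ∈ Fintype.piFinset (fun _ : Fin d => Finset.range N),
          ‖A k‖ * ∏ j, B (k j) (m j) := by
        rw [← Finset.mul_sum, Summable.tsum_finsetSum fun m _ => hsumm m]
    _ ≤ _ := by
        gcongr
        · exact summable_sum fun m _ => hsumm m
        · exact haA.mul_left _
        · exact hbox N _
end

section
/- Let (a_k)_{k≥1} be a sequence of complex numbers such that Σ_{k≥1} k·log(k+1)·|a_k| < ∞, Σ_{k≥1} a_k = 0, and Σ_{k≥1} (−1)^k a_k = 0. Then Σ_{n≥1} n · | Σ_{k≥1, k−n odd} a_k (1/(n+k) + 1/(n−k)) | < ∞. -/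
noncomputable def tK (k n : ℕ) : ℝ :=
  if n = k then 0 else 2 * ((k : ℝ) + 1) / |((n : ℝ) + 1) ^ 2 - ((k : ℝ) + 1) ^ 2|

noncomputable def hR (n : ℕ) : ℝ := (harmonic n : ℝ)

lemma hR_succ (n : ℕ) : hR (n + 1) = hR n + ((n : ℝ) + 1)⁻¹ := by
  simp [hR, harmonic_succ]

lemma hR_mono : Monotone hR := by
  apply monotone_nat_of_le_succ
  intro n
  rw [hR_succ]
  have : 0 ≤ ((n : ℝ) + 1)⁻¹ := by positivity
  linarith

lemma tK_nonneg (k n : ℕ) : 0 ≤ tK k n := by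
  unfold tK
  split_ifs
  · exact le_rfl
  · positivity

lemma tK_lt (N j : ℕ) : tK (N + j + 1) N = ((j : ℝ) + 1)⁻¹ + ((N + j + 1 + 1 + N : ℝ) + 1)⁻¹ := by
  unfold tK
  rw [if_neg (by omega)]
  push_cast
  have h : ((N : ℝ) + 1) ^ 2 - ((N : ℝ) + j + 1 + 1) ^ 2 = -((j + 1) * ((N + j + 1 + 1 + N : ℝ) + 1)) := by
    ring
  rw [h, abs_neg, abs_of_nonneg (by positivity)]
  field_simp
  ring

lemma tK_gt (k j : ℕ) : tK k (k + 1 + j) = ((j : ℝ) + 1)⁻¹ - ((2 * (k + 1) + j : ℝ) + 1)⁻¹ := by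
  unfold tK
  rw [if_neg (by omega)]
  push_cast
  have h : ((k : ℝ) + 1 + j + 1) ^ 2 - ((k : ℝ) + 1) ^ 2 = ((j + 1) * ((2 * (k + 1) + j : ℝ) + 1)) := by
    ring
  rw [h, abs_of_nonneg (by positivity)]
  field_simp
  ring

lemma T_le (k N j : ℕ) (h : k = N + j) :
    ∑ n ∈ Finset.range N, tK k n = hR k - hR j + hR (k + 1 + N) - hR (k + 1) := by
  induction N generalizing j with
  | zero => simp at h; subst h; simp
  | succ N ih =>
    rw [Finset.sum_range_succ, ih (j + 1) (by omega)]
    have h2 : k = N + j + 1 := by omega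
    have h3 : tK k N = ((j : ℝ) + 1)⁻¹ + ((N + j + 1 + 1 + N : ℝ) + 1)⁻¹ := by
      rw [h2]; exact tK_lt N j
    rw [h3, ← add_assoc (k + 1) N 1, hR_succ (k + 1 + N), hR_succ j, h2]
    push_cast
    ring

lemma T_ge (k j : ℕ) :
    ∑ n ∈ Finset.range (k + 1 + j), tK k n =
      ∑ n ∈ Finset.range k, tK k n + hR j - hR (2 * (k + 1) + j) + hR (2 * (k + 1)) := by
  induction j with
  | zero => simp [Finset.sum_range_succ, tK, hR]
  | succ j ih =>
    rw [← add_assoc, Finset.sum_range_succ, ih, tK_gt, ← add_assoc (2 * (k + 1)) j 1, hR_succ j,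
      hR_succ (2 * (k + 1) + j)]
    push_cast
    ring

lemma hR_bound (k : ℕ) : hR (2 * (k + 1)) ≤ 4 * Real.log ((k : ℝ) + 2) := by
  have h1 : hR (2 * (k + 1)) ≤ 1 + Real.log ((2 * (k + 1) : ℕ) : ℝ) := harmonic_le_one_add_log _
  have h2 : Real.log ((2 * (k + 1) : ℕ) : ℝ) ≤ Real.log (((k : ℝ) + 2) ^ 2) := by
    apply Real.log_le_log
    · positivity
    · push_cast; nlinarith [(Nat.cast_nonneg k : (0 : ℝ) ≤ k)]
  rw [Real.log_pow] at h2
  have h3 : Real.log 2 ≤ Real.log ((k : ℝ) + 2) :=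
    Real.log_le_log (by norm_num) (by linarith [(Nat.cast_nonneg k : (0 : ℝ) ≤ k)])
  have := Real.log_two_gt_d9
  push_cast at *
  linarith

lemma T_bound (k N : ℕ) : ∑ n ∈ Finset.range N, tK k n ≤ 12 * Real.log ((k : ℝ) + 2) := by
  have h1 : ∑ n ∈ Finset.range N, tK k n ≤ ∑ n ∈ Finset.range (k + 1 + N), tK k n :=
    Finset.sum_le_sum_of_subset_of_nonneg (by simp)
      (fun i _ _ => tK_nonneg k i)
  rw [T_ge, T_le k k 0 rfl] at h1
  have h2 : hR N ≤ hR (2 * (k + 1) + N) := hR_mono (by omega)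
  have h3 : hR k ≤ hR (2 * (k + 1)) := hR_mono (by omega)
  have h4 : hR (k + 1 + k) ≤ hR (2 * (k + 1)) := hR_mono (by omega)
  have h5 : hR 0 = 0 := by simp [hR]
  have h6 : 0 ≤ hR (k + 1) := by rw [← h5]; exact hR_mono (by omega)
  have := hR_bound k
  linarith

/-- weighted summability of the halved even discrete Hilbert
transform under the logarithmic weight condition and the two cancellation
conditions (`f(0) = 0` and `f(π) = 0` for the cosine series). -/
theorem stmt_19 (a : ℕ → ℂ)
    (ha : Summable fun k : ℕ => ((k : ℝ) + 1) * Real.log ((k : ℝ) + 2) * ‖a (k + 1)‖)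
    (h0 : ∑' k : ℕ, a (k + 1) = 0)
    (hpi : ∑' k : ℕ, (-1 : ℂ) ^ (k + 1) * a (k + 1) = 0) :
    Summable fun n : ℕ => ((n : ℝ) + 1) *
      ‖∑' k : ℕ, if 1 ≤ k ∧ Odd (k + (n + 1)) then
        a k * (1 / (((n : ℂ) + 1) + k) + 1 / (((n : ℂ) + 1) - k)) else 0‖ := by
  have hlog : ∀ k : ℕ, 0 ≤ Real.log ((k : ℝ) + 2) := fun k =>
    Real.log_nonneg (by linarith [(Nat.cast_nonneg k : (0 : ℝ) ≤ k)])
  -- the majorant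
  have hmaj : Summable fun k : ℕ =>
      ‖a (k + 1)‖ * (((k : ℝ) + 1) * (12 * Real.log ((k : ℝ) + 2))) := by
    refine (ha.mul_left 12).congr fun k => ?_
    ring
  have hnorm : Summable fun k : ℕ => ‖a (k + 1)‖ := by
    refine Summable.of_nonneg_of_le (fun _ => norm_nonneg _) (fun k => ?_) hmaj
    have h3 : Real.log 2 ≤ Real.log ((k : ℝ) + 2) :=
      Real.log_le_log (by norm_num) (by linarith [(Nat.cast_nonneg k : (0 : ℝ) ≤ k)])
    have h4 := Real.log_two_gt_d9
    have h5 : (0 : ℝ) ≤ k := Nat.cast_nonneg k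
    apply le_mul_of_one_le_right (norm_nonneg _)
    nlinarith
  have hs : Summable fun k : ℕ => a (k + 1) := hnorm.of_norm
  have hs' : Summable fun k : ℕ => (-1 : ℂ) ^ (k + 1) * a (k + 1) := by
    apply Summable.of_norm
    simpa using hnorm
  let g : ℕ → ℕ → ℝ := fun n k => ‖a (k + 1)‖ * (((k : ℝ) + 1) * tK k n)
  have hg0 : ∀ n k, 0 ≤ g n k := fun n k => by
    have := tK_nonneg k n
    positivity
  have hgle : ∀ N k, ∑ n ∈ Finset.range N, g n k ≤
      ‖a (k + 1)‖ * (((k : ℝ) + 1) * (12 * Real.log ((k : ℝ) + 2))) := by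
    intro N k
    simp only [g]
    rw [← Finset.mul_sum, ← Finset.mul_sum]
    have := T_bound k N
    gcongr
  have hgs : ∀ n, Summable (g n) := fun n => by
    refine Summable.of_nonneg_of_le (hg0 n) (fun k => le_trans ?_ (hgle (n + 1) k)) hmaj
    exact Finset.single_le_sum (f := fun n => g n k) (fun i _ => hg0 i k) (by simp)
  have key : ∀ n : ℕ, ((n : ℝ) + 1) *
      ‖∑' k : ℕ, if 1 ≤ k ∧ Odd (k + (n + 1)) then
        a k * (1 / (((n : ℂ) + 1) + k) + 1 / (((n : ℂ) + 1) - k)) else 0‖ ≤ ∑' k, g n k := by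
    intro n
    let h : ℕ → ℂ := fun k => if Odd (k + n) then
      a (k + 1) * (2 * ((k : ℂ) + 1) ^ 2 / (((n : ℂ) + 1) ^ 2 - ((k : ℂ) + 1) ^ 2)) else 0
    have hh : ∀ k, ‖h k‖ ≤ g n k := by
      intro k
      simp only [h]
      split_ifs with ho
      · have hne : n ≠ k := by
          rintro rfl
          exact (Nat.not_odd_iff_even.2 ⟨n, rfl⟩) ho
        simp only [g, tK, if_neg hne]
        have e : 2 * ((k : ℂ) + 1) ^ 2 / (((n : ℂ) + 1) ^ 2 - ((k : ℂ) + 1) ^ 2) =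
          ((2 * ((k : ℝ) + 1) ^ 2 / (((n : ℝ) + 1) ^ 2 - ((k : ℝ) + 1) ^ 2) : ℝ) : ℂ) := by
          push_cast; rfl
        rw [norm_mul, e, Complex.norm_real, Real.norm_eq_abs, abs_div,
          abs_of_nonneg (by positivity : (0 : ℝ) ≤ 2 * ((k : ℝ) + 1) ^ 2)]
        apply le_of_eq
        ring
      · simpa using hg0 n k
    have hhs : Summable fun k => ‖h k‖ :=
      Summable.of_nonneg_of_le (fun _ => norm_nonneg _) hh (hgs n)
    have hshift : (∑' k : ℕ, if 1 ≤ k ∧ Odd (k + (n + 1)) then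
        a k * (1 / (((n : ℂ) + 1) + k) + 1 / (((n : ℂ) + 1) - k)) else 0) =
        ∑' k : ℕ, (fun k : ℕ => if 1 ≤ k ∧ Odd (k + (n + 1)) then
        a k * (1 / (((n : ℂ) + 1) + k) + 1 / (((n : ℂ) + 1) - k)) else 0) (k + 1) := by
      symm
      apply Function.Injective.tsum_eq (g := fun k : ℕ => k + 1)
        (f := fun k : ℕ => if 1 ≤ k ∧ Odd (k + (n + 1)) then
          a k * (1 / (((n : ℂ) + 1) + k) + 1 / (((n : ℂ) + 1) - k)) else 0) (add_left_injective 1)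
      intro k hk
      rcases k with _ | k
      · simp at hk
      · exact ⟨k, rfl⟩
    have hmul : ((n : ℂ) + 1) * (∑' k : ℕ, if 1 ≤ k ∧ Odd (k + (n + 1)) then
        a k * (1 / (((n : ℂ) + 1) + k) + 1 / (((n : ℂ) + 1) - k)) else 0) = ∑' k, h k := by
      rw [hshift, ← tsum_mul_left]
      have e : ∀ k : ℕ, ((n : ℂ) + 1) * (fun k : ℕ => if 1 ≤ k ∧ Odd (k + (n + 1)) then
        a k * (1 / (((n : ℂ) + 1) + k) + 1 / (((n : ℂ) + 1) - k)) else 0) (k + 1) =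
        (a (k + 1) + (-1) ^ n * ((-1) ^ (k + 1) * a (k + 1))) + h k := by
        intro k
        simp only [h]
        by_cases ho : Odd (k + n)
        · have ho' : 1 ≤ k + 1 ∧ Odd (k + 1 + (n + 1)) :=
            ⟨by omega, by rw [Nat.odd_iff] at *; omega⟩
          rw [if_pos ho, if_pos ho']
          have hne : n ≠ k := by
            rintro rfl
            exact (Nat.not_odd_iff_even.2 ⟨n, rfl⟩) ho
          have e1 : (-1 : ℂ) ^ n * ((-1) ^ (k + 1) * a (k + 1)) = a (k + 1) := by
            rw [← mul_assoc, ← pow_add, Even.neg_one_pow, one_mul]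
            rw [Nat.odd_iff] at ho; rw [Nat.even_iff]; omega
          rw [e1]
          have d1 : ((n : ℂ) + 1) - ((k : ℂ) + 1) ≠ 0 := by
            intro hz
            apply hne
            have : (n : ℂ) = k := by linear_combination hz
            exact_mod_cast this
          have d2 : ((n : ℂ) + 1) + ((k : ℂ) + 1) ≠ 0 := by
            have : ((n + 1 + (k + 1) : ℕ) : ℂ) ≠ 0 := Nat.cast_ne_zero.2 (by omega)
            exact_mod_cast this
          have d3 : ((n : ℂ) + 1) ^ 2 - ((k : ℂ) + 1) ^ 2 =
            (((n : ℂ) + 1) + ((k : ℂ) + 1)) * (((n : ℂ) + 1) - ((k : ℂ) + 1)) := by ring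
          rw [d3]
          push_cast
          generalize (n : ℂ) + 1 = x at *
          generalize (k : ℂ) + 1 = y at *
          field_simp
          ring
        · have ho' : ¬ (1 ≤ k + 1 ∧ Odd (k + 1 + (n + 1))) := by
            rintro ⟨-, h2⟩
            apply ho
            rw [Nat.odd_iff] at *; omega
          rw [if_neg ho, if_neg ho']
          have e1 : (-1 : ℂ) ^ n * ((-1) ^ (k + 1) * a (k + 1)) = - a (k + 1) := by
            rw [← mul_assoc, ← pow_add, Odd.neg_one_pow, neg_one_mul]
            rw [Nat.odd_iff] at *; omega
          rw [e1]
          simp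
      rw [tsum_congr e, (hs.add (hs'.mul_left _)).tsum_add hhs.of_norm,
        hs.tsum_add (hs'.mul_left _), tsum_mul_left, h0, hpi]
      simp
    have hn : ‖(n : ℂ) + 1‖ = (n : ℝ) + 1 := by
      have := Complex.norm_natCast (n + 1)
      push_cast at this
      exact this
    rw [← hn, ← norm_mul, hmul]
    exact (norm_tsum_le_tsum_norm hhs).trans (hhs.tsum_le_tsum hh (hgs n))
  refine summable_of_sum_range_le
    (c := ∑' k : ℕ, ‖a (k + 1)‖ * (((k : ℝ) + 1) * (12 * Real.log ((k : ℝ) + 2))))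
    (fun n => by positivity) (fun N => ?_)
  refine (Finset.sum_le_sum fun n _ => key n).trans ?_
  rw [← Summable.tsum_finsetSum (fun n _ => hgs n)]
  exact (summable_sum fun n _ => hgs n).tsum_le_tsum (hgle N) hmaj
end
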